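/- (Eq. (9): CDF of the per-link SINR under Nakagami fading with co-channel interference and noise.) Let (Ω, P) be a probability space, n a positive natural number, a > 0, b > 0, M > 0 real numbers, and let X, Y : Ω → ℝ be independent random variables with X distributed as Gamma(n, a) (integer shape n, rate a) and Y distributed as Gamma(M, b). Then for every γ ≥ 0, the SINR Γ = X / (1 + Y) satisfies P {ω | X ω ≤ γ · (1 + Y ω)} = 1 - ∑_{i=0}^{n-1} ( (a γ)^i / i! ) · exp(-a γ) · ( b^M / Γ(M) ) · ∑_{j=0}^{i} (i choose j) · Γ(j + M) · (a γ + b)^{-(j + M)}, where Γ(·) denotes the real Gamma function. -/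

import Mathlib

open MeasureTheory ProbabilityTheory Nat

/-!
Conditioning on `Y = y ≥ 0`, the event is `X ≤ γ (1 + y)`. Since `X` has integer shape, its
distribution function is the Erlang one, `1 - ∑_{i<n} (a x)^i / i! · e^{-a x}`
(`gammaMeasure_real_Iic`, obtained from the fundamental theorem of calculus, the derivative of the
sum telescoping). At `x = γ (1 + y)` the binomial theorem turns this into a linear combination of
the functions `y ^ j * e^{-a γ y}`, whose expectations under the law of `Y` are Gamma integrals with
shape `j + M` and rate `a γ + b` (`integral_gamma_weight`).
-/

/-- The negated Erlang tail of shape `n + 1` is an antiderivative of the Erlang density. -/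
lemma hasDerivAt_erlang (a x : ℝ) (n : ℕ) :
    HasDerivAt (fun t : ℝ => -∑ i ∈ Finset.range (n + 1), (a * t) ^ i / i ! * Real.exp (-(a * t)))
      (a ^ (n + 1) / n ! * x ^ n * Real.exp (-(a * x))) x := by
  have hlin : HasDerivAt (fun t : ℝ => a * t) a x := by
    simpa using (hasDerivAt_id x).const_mul a
  have hexp : HasDerivAt (fun t : ℝ => Real.exp (-(a * t))) (Real.exp (-(a * x)) * -a) x :=
    hlin.fun_neg.exp
  induction n with
  | zero => simpa [mul_comm] using hexp.fun_neg
  | succ n ih =>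
    simp_rw [Finset.sum_range_succ _ (n + 1), neg_add]
    have h := ih.fun_add (((hlin.fun_pow (n + 1)).div_const ((n + 1)! : ℝ)).fun_mul hexp).fun_neg
    refine h.congr_deriv ?_
    rw [Nat.factorial_succ]
    push_cast
    field_simp
    ring

/-- Distribution function of the Gamma law with positive integer shape (Erlang law). -/
lemma gammaMeasure_real_Iic (a x : ℝ) (ha : 0 < a) (hx : 0 ≤ x) (n : ℕ) (hn : 0 < n) :
    (gammaMeasure n a).real (Set.Iic x) =
      1 - ∑ i ∈ Finset.range n, (a * x) ^ i / i ! * Real.exp (-(a * x)) := by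
  obtain ⟨n, rfl⟩ := Nat.exists_eq_succ_of_ne_zero hn.ne'
  have hn' : (0 : ℝ) < (n.succ : ℕ) := by positivity
  have := isProbabilityMeasure_gammaMeasure hn' ha
  have hsub : ∀ t ∈ Set.Iic x \ Set.Icc 0 x, gammaPDFReal (n.succ : ℕ) a t = 0 := by
    rintro t ⟨htx, ht⟩
    exact if_neg fun h => ht ⟨h, htx⟩
  rw [← cdf_eq_real, cdf_gammaMeasure_eq_integral hn' ha,
    setIntegral_eq_of_subset_of_forall_sdiff_eq_zero measurableSet_Iic
      Set.Icc_subset_Iic_self hsub, integral_Icc_eq_integral_Ioc]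
  have hcongr : ∫ t in Set.Ioc 0 x, gammaPDFReal (n.succ : ℕ) a t =
      ∫ t in Set.Ioc 0 x, a ^ (n + 1) / n ! * t ^ n * Real.exp (-(a * t)) := by
    refine setIntegral_congr_fun measurableSet_Ioc fun t ht => ?_
    have h1 : ((n.succ : ℕ) : ℝ) - 1 = n := by simp
    simp only [gammaPDFReal, if_pos ht.1.le]
    rw [h1, Real.rpow_natCast, Real.rpow_natCast, Nat.succ_eq_add_one, Nat.cast_add_one,
      Real.Gamma_nat_eq_factorial]
  rw [hcongr, ← intervalIntegral.integral_of_le hx,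
    intervalIntegral.integral_eq_sub_of_hasDerivAt (fun t _ => hasDerivAt_erlang a t n)
      (Continuous.intervalIntegrable (by fun_prop) _ _)]
  -- at `t = 0` only the term `i = 0` survives
  have h0 : ∑ i ∈ Finset.range (n + 1),
      (a * (0 : ℝ)) ^ i / i ! * Real.exp (-(a * 0)) = 1 := by
    simp [Finset.sum_range_succ']
  rw [h0]
  ring

/-- Exponentially tilted moments of a Gamma law: tilting by `e^{-c y}` moves the rate from `b` to
`c + b`, and the factor `y ^ j` moves the shape from `M` to `j + M`. -/
lemma integral_gamma_weight (b M c : ℝ) (hb : 0 < b) (hM : 0 < M) (hc : 0 ≤ c) (j : ℕ) :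
    ∫ y, y ^ j * Real.exp (-(c * y)) ∂(gammaMeasure M b) =
      b ^ M / Real.Gamma M * (Real.Gamma (j + M) * (c + b) ^ (-((j : ℝ) + M))) := by
  have hjM : 0 < (j : ℝ) + M := by positivity
  rw [gammaMeasure, integral_withDensity_eq_integral_toReal_smul
    (by unfold gammaPDF; fun_prop) (by simp [gammaPDF])]
  have hzero : ∀ y ∉ Set.Ici (0 : ℝ),
      (gammaPDF M b y).toReal • (y ^ j * Real.exp (-(c * y))) = 0 := by
    intro y hy
    simp [gammaPDF_of_neg (not_le.mp hy)]
  rw [← setIntegral_eq_integral_of_forall_compl_eq_zero hzero, integral_Ici_eq_integral_Ioi]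
  have hcb : 0 < c + b := by positivity
  have key := Real.integral_rpow_mul_exp_neg_mul_Ioi hjM hcb
  rw [one_div, Real.inv_rpow hcb.le, ← Real.rpow_neg hcb.le, mul_comm] at key
  rw [← key, ← integral_const_mul]
  refine setIntegral_congr_fun measurableSet_Ioi fun y (hy : 0 < y) => ?_
  have hnn := gammaPDFReal_nonneg hM hb y
  simp only [gammaPDF, ENNReal.toReal_ofReal hnn]
  simp only [gammaPDFReal, if_pos hy.le, smul_eq_mul]
  rw [add_sub_assoc, Real.rpow_add hy, Real.rpow_natCast, add_mul, neg_add, Real.exp_add]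
  ring

lemma integrable_gamma_weight (b M c : ℝ) (hb : 0 < b) (hM : 0 < M) (hc : 0 ≤ c) (j : ℕ) :
    Integrable (fun y : ℝ => y ^ j * Real.exp (-(c * y))) (gammaMeasure M b) := by
  -- a nonzero Bochner integral forces integrability
  refine Integrable.of_integral_ne_zero ?_
  rw [integral_gamma_weight b M c hb hM hc j]
  have := Real.Gamma_pos_of_pos hM
  have := Real.Gamma_pos_of_pos (show 0 < (j : ℝ) + M by positivity)
  positivity

/-- Eq. (9): CDF of the per-link SINR `X/(1+Y)` where `X` is Gamma with integer
shape `n` and rate `a` and `Y` is Gamma with shape `M` and rate `b`, with `X`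
and `Y` independent. -/
theorem sinr_cdf_nakagami_cci {Ω : Type*} [MeasurableSpace Ω]
    (P : Measure Ω) [IsProbabilityMeasure P]
    (n : ℕ) (hn : 0 < n) (a b M : ℝ) (ha : 0 < a) (hb : 0 < b) (hM : 0 < M)
    (X Y : Ω → ℝ) (hX : Measurable X) (hY : Measurable Y)
    (hXY : IndepFun X Y P)
    (hXdist : Measure.map X P = gammaMeasure (n : ℝ) a)
    (hYdist : Measure.map Y P = gammaMeasure M b)
    (γ : ℝ) (hγ : 0 ≤ γ) :
    (P {ω | X ω ≤ γ * (1 + Y ω)}).toReal =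
      1 - ∑ i ∈ Finset.range n, ((a * γ) ^ i / i !) * Real.exp (-(a * γ)) *
        (b ^ M / Real.Gamma M) * ∑ j ∈ Finset.range (i + 1),
          (i.choose j : ℝ) * Real.Gamma ((j : ℝ) + M) *
            (a * γ + b) ^ (-((j : ℝ) + M)) := by
  have hn' : (0 : ℝ) < n := by exact_mod_cast hn
  have hc : 0 ≤ a * γ := by positivity
  have hpX := isProbabilityMeasure_gammaMeasure hn' ha
  have hpY := isProbabilityMeasure_gammaMeasure hM hb
  have hS : MeasurableSet {p : ℝ × ℝ | p.1 ≤ γ * (1 + p.2)} :=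
    measurableSet_le (by fun_prop) (by fun_prop)
  have hmap := (indepFun_iff_map_prod_eq_prod_map_map hX.aemeasurable hY.aemeasurable).mp hXY
  rw [hXdist, hYdist] at hmap
  have hcond : (P {ω | X ω ≤ γ * (1 + Y ω)}).toReal =
      ∫ y, (gammaMeasure n a).real (Set.Iic (γ * (1 + y))) ∂(gammaMeasure M b) := by
    have h1 : P {ω | X ω ≤ γ * (1 + Y ω)} =
        ((gammaMeasure n a).prod (gammaMeasure M b)) {p : ℝ × ℝ | p.1 ≤ γ * (1 + p.2)} := by
      rw [← hmap, Measure.map_apply (hX.prodMk hY) hS]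
      rfl
    rw [h1, Measure.prod_apply_symm hS, ← integral_toReal
      (measurable_measure_prodMk_right hS).aemeasurable (ae_of_all _ fun y => measure_lt_top _ _)]
    rfl
  have hnonneg : ∀ᵐ y ∂(gammaMeasure M b), 0 ≤ y := by
    rw [gammaMeasure, ae_withDensity_iff (by unfold gammaPDF; fun_prop)]
    refine ae_of_all _ fun y hy => ?_
    by_contra h
    exact hy (gammaPDF_of_neg (not_le.mp h))
  have hint := integrable_gamma_weight b M (a * γ) hb hM hc
  -- binomial expansion of the Erlang tail evaluated at `γ * (1 + y)`
  have hexpand : ∀ᵐ y ∂(gammaMeasure M b),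
      (gammaMeasure n a).real (Set.Iic (γ * (1 + y))) =
        1 - ∑ i ∈ Finset.range n, ((a * γ) ^ i / i !) * Real.exp (-(a * γ)) *
          ∑ j ∈ Finset.range (i + 1),
            (i.choose j : ℝ) * (y ^ j * Real.exp (-(a * γ * y))) := by
    filter_upwards [hnonneg] with y hy
    rw [gammaMeasure_real_Iic a _ ha (by positivity) n hn]
    congr 1
    refine Finset.sum_congr rfl fun i _ => ?_
    have hexp : Real.exp (-(a * (γ * (1 + y)))) =
        Real.exp (-(a * γ)) * Real.exp (-(a * γ * y)) := by
      rw [← Real.exp_add]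
      ring_nf
    have hbinom : (1 + y) ^ i * Real.exp (-(a * γ * y)) = ∑ j ∈ Finset.range (i + 1),
        (i.choose j : ℝ) * (y ^ j * Real.exp (-(a * γ * y))) := by
      rw [add_comm, add_pow, Finset.sum_mul]
      exact Finset.sum_congr rfl fun j _ => by ring
    rw [hexp, ← hbinom, ← mul_assoc a, mul_pow (a * γ)]
    ring
  rw [hcond, integral_congr_ae hexpand, integral_sub (integrable_const _)
    (integrable_finsetSum _ fun i _ => (integrable_finsetSum _ fun j _ =>
      (hint j).const_mul _).const_mul _), integral_finsetSum _ fun i _ =>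
        (integrable_finsetSum _ fun j _ => (hint j).const_mul _).const_mul _]
  congr 1
  · simp
  refine Finset.sum_congr rfl fun i _ => ?_
  rw [integral_const_mul, integral_finsetSum _ fun j _ => (hint j).const_mul _,
    mul_assoc _ (b ^ M / Real.Gamma M), Finset.mul_sum _ _ (b ^ M / Real.Gamma M)]
  congr 1
  refine Finset.sum_congr rfl fun j _ => ?_
  rw [integral_const_mul, integral_gamma_weight b M (a * γ) hb hM hc j]
  ring
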